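/- Let T > 0, let μ be a real constant, let θ, σ₁, σ₂, η : [0,T] → ℝ be continuous with η(t) > 0 for all t, and let D, E, F, G, H, I, L, M, N, O, P, Q : [0,T) → ℝ be differentiable. Define C(x,β,t) = x²D(t) + β²E(t) + xβF(t) + xG(t) + βH(t) + I(t) and f(x,β,t) = x²L(t) + β²M(t) + xβN(t) + xO(t) + βP(t) + Q(t). If for all x, β ∈ ℝ and all t ∈ [0,T) the equations 0 = −θxβ − C_β·θβ + (1/2)C_ββ(σ₁²+σ₂²) + C_t − C_x²/(4η) + μσ₁²(x + f_β)² + μσ₂²f_β² and 0 = −θxβ + C_x²/(4η) − f_β·θβ + (1/2)f_ββ(σ₁²+σ₂²) − C_x·f_x/(2η) + f_t hold, then the coefficient functions satisfy, on [0,T): −D′ = −D²/η + μσ₁²(1+N)² + μσ₂²N²; −E′ = −2θE − F²/(4η) + 4μ(σ₁²+σ₂²)M²; −F′ = −θ − θF − DF/η + 4μσ₁²(1+N)M + 4μσ₂²MN; −G′ = −DG/η + 2μσ₁²(1+N)P + 2μσ₂²NP; −H′ = −θH − FG/(2η) + 4μ(σ₁²+σ₂²)MP; −I′ = (σ₁²+σ₂²)E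 − G²/(4η) + μ(σ₁²+σ₂²)P²; −L′ = D²/η − 2DL/η; −M′ = F²/(4η) − 2θM − FN/(2η); −N′ = −θ + DF/η − θN − (DN+FL)/η; −O′ = (DG − DO − GL)/η; −P′ = −θP + (FG − FO − GN)/(2η); −Q′ = G²/(4η) + (σ₁²+σ₂²)M − GO/(2η). -/

import Mathlib

/-- Quadratic ansatz `(x, β, t) ↦ x²D(t) + β²E(t) + xβF(t) + xG(t) + βH(t) + I(t)`. -/
noncomputable def quadAnsatz (D E F G H I : ℝ → ℝ) : ℝ → ℝ → ℝ → ℝ :=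
  fun x β t => x ^ 2 * D t + β ^ 2 * E t + x * β * F t + x * G t + β * H t + I t

/-- Partial derivative in the first (position) variable. -/
noncomputable def pdX (C : ℝ → ℝ → ℝ → ℝ) (x β t : ℝ) : ℝ := deriv (fun y => C y β t) x

/-- Partial derivative in the second variable. -/
noncomputable def pdB (C : ℝ → ℝ → ℝ → ℝ) (x β t : ℝ) : ℝ := deriv (fun b => C x b t) β

/-- Second partial derivative in the second variable. -/
noncomputable def pdBB (C : ℝ → ℝ → ℝ → ℝ) (x β t : ℝ) : ℝ := deriv (fun b => pdB C x b t) β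

/-- Partial derivative in the time variable. -/
noncomputable def pdT (C : ℝ → ℝ → ℝ → ℝ) (x β t : ℝ) : ℝ := deriv (fun s => C x β s) t

lemma pdX_quadAnsatz (D E F G H I : ℝ → ℝ) (x β t : ℝ) :
    pdX (quadAnsatz D E F G H I) x β t = 2 * x * D t + β * F t + G t := by
  have h1 := hasDerivAt_id' x
  have h := ((((((h1.pow 2).mul_const (D t)).add_const (β ^ 2 * E t)).add
    ((h1.mul_const β).mul_const (F t))).add (h1.mul_const (G t))).add_const
      (β * H t)).add_const (I t)
  refine Eq.trans (HasDerivAt.deriv h) ?_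
  norm_num

lemma pdB_quadAnsatz (D E F G H I : ℝ → ℝ) (x β t : ℝ) :
    pdB (quadAnsatz D E F G H I) x β t = 2 * β * E t + x * F t + H t := by
  have h1 := hasDerivAt_id' β
  have h := ((((((h1.pow 2).mul_const (E t)).const_add (x ^ 2 * D t)).add
    ((h1.const_mul x).mul_const (F t))).add_const (x * G t)).add
      (h1.mul_const (H t))).add_const (I t)
  refine Eq.trans (HasDerivAt.deriv h) ?_
  norm_num

lemma pdBB_quadAnsatz (D E F G H I : ℝ → ℝ) (x β t : ℝ) :
    pdBB (quadAnsatz D E F G H I) x β t = 2 * E t := by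
  unfold pdBB
  simp only [pdB_quadAnsatz]
  have h := ((((hasDerivAt_id' β).const_mul 2).mul_const (E t)).add_const
    (x * F t)).add_const (H t)
  refine Eq.trans (HasDerivAt.deriv h) ?_
  norm_num

lemma pdT_quadAnsatz {D E F G H I : ℝ → ℝ} {D' E' F' G' H' I' t : ℝ}
    (hD : HasDerivAt D D' t) (hE : HasDerivAt E E' t) (hF : HasDerivAt F F' t)
    (hG : HasDerivAt G G' t) (hH : HasDerivAt H H' t) (hI : HasDerivAt I I' t) (x β : ℝ) :
    pdT (quadAnsatz D E F G H I) x β t =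
      x ^ 2 * D' + β ^ 2 * E' + x * β * F' + x * G' + β * H' + I' :=
  HasDerivAt.deriv ((((((hD.const_mul (x ^ 2)).add (hE.const_mul (β ^ 2))).add
    (hF.const_mul (x * β))).add (hG.const_mul x)).add (hH.const_mul β)).add hI)

/-- coefficient-matching converse: In the random-pricing-signal
model, if the quadratic ansätze `C` and `f` solve the two coupled HJB-type
PDEs for all `x, β ∈ ℝ` and `t ∈ [0,T)`, then the coefficient functions
`D, …, Q` solve the displayed ODE system on `[0,T)`. -/
theorem signal_HJB_implies_ODE_system
    (T μ : ℝ) (hT : 0 < T)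
    (θ σ₁ σ₂ η : ℝ → ℝ)
    (hθ : ContinuousOn θ (Set.Icc 0 T)) (hσ₁ : ContinuousOn σ₁ (Set.Icc 0 T))
    (hσ₂ : ContinuousOn σ₂ (Set.Icc 0 T)) (hη : ContinuousOn η (Set.Icc 0 T))
    (hηpos : ∀ t ∈ Set.Icc (0 : ℝ) T, 0 < η t)
    (D E F G H I L M N O P Q D' E' F' G' H' I' L' M' N' O' P' Q' : ℝ → ℝ)
    (hD : ∀ t ∈ Set.Ico (0 : ℝ) T, HasDerivAt D (D' t) t)
    (hE : ∀ t ∈ Set.Ico (0 : ℝ) T, HasDerivAt E (E' t) t)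
    (hF : ∀ t ∈ Set.Ico (0 : ℝ) T, HasDerivAt F (F' t) t)
    (hG : ∀ t ∈ Set.Ico (0 : ℝ) T, HasDerivAt G (G' t) t)
    (hH : ∀ t ∈ Set.Ico (0 : ℝ) T, HasDerivAt H (H' t) t)
    (hI : ∀ t ∈ Set.Ico (0 : ℝ) T, HasDerivAt I (I' t) t)
    (hL : ∀ t ∈ Set.Ico (0 : ℝ) T, HasDerivAt L (L' t) t)
    (hM : ∀ t ∈ Set.Ico (0 : ℝ) T, HasDerivAt M (M' t) t)
    (hN : ∀ t ∈ Set.Ico (0 : ℝ) T, HasDerivAt N (N' t) t)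
    (hO : ∀ t ∈ Set.Ico (0 : ℝ) T, HasDerivAt O (O' t) t)
    (hP : ∀ t ∈ Set.Ico (0 : ℝ) T, HasDerivAt P (P' t) t)
    (hQ : ∀ t ∈ Set.Ico (0 : ℝ) T, HasDerivAt Q (Q' t) t)
    (hpde : ∀ (x β : ℝ), ∀ t ∈ Set.Ico (0 : ℝ) T,
      (0 = -θ t * x * β
          - pdB (quadAnsatz D E F G H I) x β t * θ t * β
          + (1 / 2) * pdBB (quadAnsatz D E F G H I) x β t * ((σ₁ t) ^ 2 + (σ₂ t) ^ 2)
          + pdT (quadAnsatz D E F G H I) x β t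
          - (pdX (quadAnsatz D E F G H I) x β t) ^ 2 / (4 * η t)
          + μ * (σ₁ t) ^ 2 * (x + pdB (quadAnsatz L M N O P Q) x β t) ^ 2
          + μ * (σ₂ t) ^ 2 * (pdB (quadAnsatz L M N O P Q) x β t) ^ 2) ∧
      (0 = -θ t * x * β
          + (pdX (quadAnsatz D E F G H I) x β t) ^ 2 / (4 * η t)
          - pdB (quadAnsatz L M N O P Q) x β t * θ t * β
          + (1 / 2) * pdBB (quadAnsatz L M N O P Q) x β t * ((σ₁ t) ^ 2 + (σ₂ t) ^ 2)
          - pdX (quadAnsatz D E F G H I) x β t * pdX (quadAnsatz L M N O P Q) x β t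
              / (2 * η t)
          + pdT (quadAnsatz L M N O P Q) x β t)) :
    ∀ t ∈ Set.Ico (0 : ℝ) T,
      (-D' t = -(D t) ^ 2 / η t + μ * (σ₁ t) ^ 2 * (1 + N t) ^ 2
          + μ * (σ₂ t) ^ 2 * (N t) ^ 2) ∧
      (-E' t = -2 * θ t * E t - (F t) ^ 2 / (4 * η t)
          + 4 * μ * ((σ₁ t) ^ 2 + (σ₂ t) ^ 2) * (M t) ^ 2) ∧
      (-F' t = -θ t - θ t * F t - D t * F t / η t
          + 4 * μ * (σ₁ t) ^ 2 * (1 + N t) * M t + 4 * μ * (σ₂ t) ^ 2 * M t * N t) ∧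
      (-G' t = -D t * G t / η t + 2 * μ * (σ₁ t) ^ 2 * (1 + N t) * P t
          + 2 * μ * (σ₂ t) ^ 2 * N t * P t) ∧
      (-H' t = -θ t * H t - F t * G t / (2 * η t)
          + 4 * μ * ((σ₁ t) ^ 2 + (σ₂ t) ^ 2) * M t * P t) ∧
      (-I' t = ((σ₁ t) ^ 2 + (σ₂ t) ^ 2) * E t - (G t) ^ 2 / (4 * η t)
          + μ * ((σ₁ t) ^ 2 + (σ₂ t) ^ 2) * (P t) ^ 2) ∧
      (-L' t = (D t) ^ 2 / η t - 2 * D t * L t / η t) ∧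
      (-M' t = (F t) ^ 2 / (4 * η t) - 2 * θ t * M t - F t * N t / (2 * η t)) ∧
      (-N' t = -θ t + D t * F t / η t - θ t * N t
          - (D t * N t + F t * L t) / η t) ∧
      (-O' t = (D t * G t - D t * O t - G t * L t) / η t) ∧
      (-P' t = -θ t * P t + (F t * G t - F t * O t - G t * N t) / (2 * η t)) ∧
      (-Q' t = (G t) ^ 2 / (4 * η t) + ((σ₁ t) ^ 2 + (σ₂ t) ^ 2) * M t
          - G t * O t / (2 * η t)) := by
  intro t ht
  have hT1 := pdT_quadAnsatz (hD t ht) (hE t ht) (hF t ht) (hG t ht) (hH t ht) (hI t ht)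
  have hT2 := pdT_quadAnsatz (hL t ht) (hM t ht) (hN t ht) (hO t ht) (hP t ht) (hQ t ht)
  have key := fun x β => hpde x β t ht
  simp only [pdX_quadAnsatz, pdB_quadAnsatz, pdBB_quadAnsatz, hT1, hT2] at key
  obtain ⟨a00, b00⟩ := key 0 0
  obtain ⟨a10, b10⟩ := key 1 0
  obtain ⟨am0, bm0⟩ := key (-1) 0
  obtain ⟨a01, b01⟩ := key 0 1
  obtain ⟨a0m, b0m⟩ := key 0 (-1)
  obtain ⟨a11, b11⟩ := key 1 1
  refine ⟨?_, ?_, ?_, ?_, ?_, ?_, ?_, ?_, ?_, ?_, ?_, ?_⟩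
  · linear_combination (1 / 2) * a10 + (1 / 2) * am0 - a00
  · linear_combination (1 / 2) * a01 + (1 / 2) * a0m - a00
  · linear_combination a11 - a10 - a01 + a00
  · linear_combination (1 / 2) * a10 - (1 / 2) * am0
  · linear_combination (1 / 2) * a01 - (1 / 2) * a0m
  · linear_combination a00
  · linear_combination (1 / 2) * b10 + (1 / 2) * bm0 - b00
  · linear_combination (1 / 2) * b01 + (1 / 2) * b0m - b00
  · linear_combination b11 - b10 - b01 + b00
  · linear_combination (1 / 2) * b10 - (1 / 2) * bm0
  · linear_combination (1 / 2) * b01 - (1 / 2) * b0m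
  · linear_combination b00
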